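/- arXiv:2305.13270 — 2 statements merged into one kernel-verified Lean document; each statement's English description precedes it below -/
import Mathlib

section
/- Let E be a finite dimensional Banach space and F any Banach space. Then K_G(E, F*) = K_G(E, F), where F* is the dual Banach space of F. -/
/-!
The trace pairing between `v : E* → F*` and `B : E → F` is `P(v, B) = ∑ j, v (b_j*) (B b_j)` for a
basis `b` of `E`; it satisfies `P(v, ∑ η_i ⊗ f_i) = ∑ v(η_i)(f_i)`, so `P(v, B) ≤ ‖v‖ ‖B‖_∧`
(`tracePair_le`).  Moving `A` to the other side gives `P(v, u ∘ Aᵀ) = P(J u, v ∘ A)`, where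
`J : F → F**` is the canonical embedding (`tracePair_swap`).  As `A` and `Aᵀ` run over the same
unit ball, the theorem follows as soon as the projective norm is recovered by the pairing in two
ways.

* On `E* ⊗ F`, testing against operators `E* → F*`: this is Hahn–Banach for the sublinear
  functional `projNorm` (`exists_tracePair_eq`).
* On `E* ⊗ F*`, testing against operators `E* → F` only, instead of `E* → F**`
  (`projNorm_dual_le`).  A finite `ε`-net `ξ_i` of the unit ball of `E*` embeds `L(E*, F)` into
  `ℓ_∞^N(F)` up to a factor `1 - ε`.  A functional on `L(E*, F)` therefore extends to `ℓ_∞^N(F)`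
  and takes the form `u ↦ ∑ f_i*(u ξ_i)` with `∑ ‖f_i*‖` under control, which
  exhibits the tensor as `∑ ξ_i ⊗ f_i*`.
-/

open scoped BigOperators

/-- The projective tensor norm of the element of `X* ⊗ F` corresponding (via the canonical
identification, `X` finite dimensional) to the continuous linear map `u : X → F`. -/
noncomputable def projNorm {X F : Type*} [NormedAddCommGroup X] [NormedSpace ℝ X]
    [NormedAddCommGroup F] [NormedSpace ℝ F] (u : X →L[ℝ] F) : ℝ :=
  sInf { r : ℝ | ∃ (k : ℕ) (η : Fin k → (X →L[ℝ] ℝ)) (f : Fin k → F),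
    (∀ x, u x = ∑ i, η i x • f i) ∧ r = ∑ i, ‖η i‖ * ‖f i‖ }

/-- The Grothendieck constant `K_G(E,F)`.  An element of `E ⊗ F` is encoded as a map
`u : E* → F`, an element of `E* ⊗ F` as a map `E → F`, and `A ⊗ id_F` sends `u` to
`u ∘ Aᵀ`, where `Aᵀ = A.flip : E → E*`. -/
noncomputable def KG (E F : Type*) [NormedAddCommGroup E] [NormedSpace ℝ E]
    [NormedAddCommGroup F] [NormedSpace ℝ F] : ℝ :=
  sSup { r : ℝ | ∃ (A : E →L[ℝ] (E →L[ℝ] ℝ)) (u : (E →L[ℝ] ℝ) →L[ℝ] F),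
    ‖A‖ ≤ 1 ∧ ‖u‖ ≤ 1 ∧ r = projNorm (u.comp A.flip) }

/-- `ρ(E,F)`: the norm of the identity from `E ⊗̌ F` to `E ⊗̂ F`. -/
noncomputable def rho (E F : Type*) [NormedAddCommGroup E] [NormedSpace ℝ E]
    [NormedAddCommGroup F] [NormedSpace ℝ F] : ℝ :=
  sSup { r : ℝ | ∃ u : (E →L[ℝ] ℝ) →L[ℝ] F, ‖u‖ ≤ 1 ∧ r = projNorm u }

/-- `A : E → E*` is non-negative: the corresponding tensor in `E* ⊗ E*` is a (finite) sum of
symmetric tensors `η ⊗ η`, i.e. lies in the convex hull of such tensors. -/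
def IsNonnegMap {E : Type*} [NormedAddCommGroup E] [NormedSpace ℝ E]
    (A : E →L[ℝ] (E →L[ℝ] ℝ)) : Prop :=
  ∃ (k : ℕ) (η : Fin k → (E →L[ℝ] ℝ)), ∀ x, A x = ∑ i, η i x • η i

/-- A tensor `z ∈ E ⊗ E` (encoded as a map `E* → E`) is non-negative if it is a finite sum of
symmetric tensors `e ⊗ e`. -/
def IsNonnegTensor {E : Type*} [NormedAddCommGroup E] [NormedSpace ℝ E]
    (z : (E →L[ℝ] ℝ) →L[ℝ] E) : Prop :=
  ∃ (k : ℕ) (e : Fin k → E), ∀ φ, z φ = ∑ i, φ (e i) • e i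

/-- The positive Grothendieck constant `K_G⁺(E,F)`. -/
noncomputable def KGpos (E F : Type*) [NormedAddCommGroup E] [NormedSpace ℝ E]
    [NormedAddCommGroup F] [NormedSpace ℝ F] : ℝ :=
  sSup { r : ℝ | ∃ (A : E →L[ℝ] (E →L[ℝ] ℝ)) (u : (E →L[ℝ] ℝ) →L[ℝ] F),
    IsNonnegMap A ∧ ‖A‖ ≤ 1 ∧ ‖u‖ ≤ 1 ∧ r = projNorm (u.comp A.flip) }

/-- The factorization constant `f(X,E)` of `X` through `E`. -/
noncomputable def factConst (X E : Type*) [NormedAddCommGroup X] [NormedSpace ℝ X]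
    [NormedAddCommGroup E] [NormedSpace ℝ E] : ℝ :=
  sInf { r : ℝ | ∃ (u : X →L[ℝ] E) (v : E →L[ℝ] X),
    v.comp u = ContinuousLinearMap.id ℝ X ∧ r = ‖u‖ * ‖v‖ }

/-- `γ(E) = sup { tr(BA) : A ≥ 0, B ≥ 0, ‖A‖ ≤ 1, ‖B‖ ≤ 1 }`. -/
noncomputable def gammaConst (E : Type*) [NormedAddCommGroup E] [NormedSpace ℝ E] : ℝ :=
  sSup { r : ℝ | ∃ (A : E →L[ℝ] (E →L[ℝ] ℝ)) (B : (E →L[ℝ] ℝ) →L[ℝ] E),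
    IsNonnegMap A ∧ IsNonnegTensor B ∧ ‖A‖ ≤ 1 ∧ ‖B‖ ≤ 1 ∧
    r = LinearMap.trace ℝ E ((B.comp A : E →L[ℝ] E) : E →ₗ[ℝ] E) }

/-- `ρ⁺(E)`: as `ρ(E,E)` but the supremum is restricted to non-negative tensors. -/
noncomputable def rhoPlus (E : Type*) [NormedAddCommGroup E] [NormedSpace ℝ E] : ℝ :=
  sSup { r : ℝ | ∃ z : (E →L[ℝ] ℝ) →L[ℝ] E,
    IsNonnegTensor z ∧ ‖z‖ ≤ 1 ∧ r = projNorm z }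

/-- `X` has (Rademacher) cotype `q`. -/
def HasCotype (X : Type*) [NormedAddCommGroup X] [NormedSpace ℝ X] (q : ℝ) : Prop :=
  ∃ C > 0, ∀ (n : ℕ) (x : Fin n → X),
    (∑ i, ‖x i‖ ^ q) ^ (1/q) ≤
      C * (((2 : ℝ) ^ n)⁻¹ *
        ∑ ε : Fin n → Bool, ‖∑ i, (if ε i then (1:ℝ) else -1) • x i‖ ^ 2) ^ (1/2 : ℝ)

/-! ### Elementary bounds for the projective norm -/

section ProjNorm

variable {X F : Type*} [NormedAddCommGroup X] [NormedSpace ℝ X]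
  [NormedAddCommGroup F] [NormedSpace ℝ F]

lemma projNorm_bddBelow (u : X →L[ℝ] F) :
    BddBelow { r : ℝ | ∃ (k : ℕ) (η : Fin k → (X →L[ℝ] ℝ)) (f : Fin k → F),
    (∀ x, u x = ∑ i, η i x • f i) ∧ r = ∑ i, ‖η i‖ * ‖f i‖ } := by
  refine ⟨0, ?_⟩
  rintro r ⟨k, η, f, -, rfl⟩
  positivity

/-- Any finite family may index a decomposition, not only `Fin k`. -/
lemma projNorm_le {ι : Type*} [Fintype ι] (u : X →L[ℝ] F) (η : ι → (X →L[ℝ] ℝ)) (f : ι → F)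
    (h : ∀ x, u x = ∑ i, η i x • f i) : projNorm u ≤ ∑ i, ‖η i‖ * ‖f i‖ := by
  refine csInf_le (projNorm_bddBelow u) ⟨Fintype.card ι, η ∘ (Fintype.equivFin ι).symm,
    f ∘ (Fintype.equivFin ι).symm, fun x => ?_, ?_⟩
  · rw [h x]
    exact ((Fintype.equivFin ι).symm.sum_comp (fun i => η i x • f i)).symm
  · exact ((Fintype.equivFin ι).symm.sum_comp (fun i => ‖η i‖ * ‖f i‖)).symm

lemma projNorm_nonneg (u : X →L[ℝ] F) : 0 ≤ projNorm u := by
  refine Real.sInf_nonneg ?_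
  rintro r ⟨k, η, f, -, rfl⟩
  positivity

end ProjNorm

/-! ### The projective norm on a finite dimensional domain -/

section Pairing

-- The value used throughout Mathlib; iterated operator spaces need it for their norm instances.
set_option maxSynthPendingDepth 3

variable {E F : Type*} [NormedAddCommGroup E] [NormedSpace ℝ E] [FiniteDimensional ℝ E]
  [NormedAddCommGroup F] [NormedSpace ℝ F]

variable (E) in
/-- The coordinate functionals of the chosen basis of `E`, as continuous functionals. -/
noncomputable def dualVec (j : Fin (Module.finrank ℝ E)) : E →L[ℝ] ℝ :=
  LinearMap.toContinuousLinearMap ((Module.finBasis ℝ E).coord j)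

lemma sum_dualVec (x : E) : ∑ j, dualVec E j x • Module.finBasis ℝ E j = x := by
  simp [dualVec]

lemma sum_dualVec_smul (η : E →L[ℝ] ℝ) : ∑ j, η (Module.finBasis ℝ E j) • dualVec E j = η := by
  ext x
  conv_rhs => rw [← sum_dualVec x, map_sum]
  simp [mul_comm]

lemma map_eq_sum_dualVec (u : E →L[ℝ] F) (x : E) :
    u x = ∑ j, dualVec E j x • u (Module.finBasis ℝ E j) := by
  conv_lhs => rw [← sum_dualVec x, map_sum]
  simp

/-- The projective norm is approximated by finite decompositions; finite dimension of the domain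
guarantees that decompositions exist. -/
lemma exists_decomp_lt (u : E →L[ℝ] F) {c : ℝ} (hc : projNorm u < c) :
    ∃ (k : ℕ) (η : Fin k → (E →L[ℝ] ℝ)) (f : Fin k → F),
      (∀ x, u x = ∑ i, η i x • f i) ∧ ∑ i, ‖η i‖ * ‖f i‖ < c := by
  unfold projNorm at hc
  obtain ⟨r, ⟨k, η, f, h, rfl⟩, hr⟩ := exists_lt_of_csInf_lt (by
    exact ⟨_, _, dualVec E, fun j => u (Module.finBasis ℝ E j), map_eq_sum_dualVec u, rfl⟩) hc
  exact ⟨k, η, f, h, hr⟩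

lemma projNorm_add_le (u v : E →L[ℝ] F) : projNorm (u + v) ≤ projNorm u + projNorm v := by
  refine le_of_forall_pos_le_add fun ε hε => ?_
  obtain ⟨k, η, f, h, hr⟩ := exists_decomp_lt u (show projNorm u < projNorm u + ε / 2 by linarith)
  obtain ⟨l, θ, g, h', hr'⟩ :=
    exists_decomp_lt v (show projNorm v < projNorm v + ε / 2 by linarith)
  have := projNorm_le (u + v) (Sum.elim η θ) (Sum.elim f g) (by intro x; simp [h, h'])
  simp only [Fintype.sum_sum_type, Sum.elim_inl, Sum.elim_inr] at this
  linarith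

lemma projNorm_smul_le (u : E →L[ℝ] F) {c : ℝ} (hc : 0 < c) :
    projNorm (c • u) ≤ c * projNorm u := by
  rw [← div_le_iff₀' hc]
  refine le_of_forall_gt fun d hd => ?_
  obtain ⟨k, η, f, h, hr⟩ := exists_decomp_lt u hd
  have := projNorm_le (c • u) η (fun i => c • f i)
    (by intro x; simp [h, Finset.smul_sum, smul_comm c])
  rw [div_lt_iff₀' hc]
  refine this.trans_lt ?_
  simp only [norm_smul, Real.norm_of_nonneg hc.le]
  calc ∑ i, ‖η i‖ * (c * ‖f i‖) = c * ∑ i, ‖η i‖ * ‖f i‖ := by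
        rw [Finset.mul_sum]; exact Finset.sum_congr rfl fun i _ => by ring
    _ < c * d := by gcongr

lemma projNorm_smul (u : E →L[ℝ] F) {c : ℝ} (hc : 0 < c) :
    projNorm (c • u) = c * projNorm u := by
  refine le_antisymm (projNorm_smul_le u hc) ?_
  have := projNorm_smul_le (c • u) (inv_pos.2 hc)
  rw [inv_smul_smul₀ hc.ne'] at this
  rwa [← le_inv_mul_iff₀ hc]

/-! ### The trace pairing -/

/-- The trace pairing of `v : E* → F*` (an element of `E ⊗ F*`) with `B : E → F` (an element of
`E* ⊗ F`), written in the chosen basis of `E`. -/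
noncomputable def tracePair (v : (E →L[ℝ] ℝ) →L[ℝ] (F →L[ℝ] ℝ)) (B : E →L[ℝ] F) : ℝ :=
  ∑ j, v (dualVec E j) (B (Module.finBasis ℝ E j))

/-- The trace pairing can be computed from any decomposition of `B`, so it does not depend on the
basis. -/
lemma tracePair_eq_sum {ι : Type*} [Fintype ι] (v : (E →L[ℝ] ℝ) →L[ℝ] (F →L[ℝ] ℝ))
    (B : E →L[ℝ] F) (η : ι → (E →L[ℝ] ℝ)) (f : ι → F) (h : ∀ x, B x = ∑ i, η i x • f i) :
    tracePair v B = ∑ i, v (η i) (f i) := by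
  have : ∀ i, v (η i) (f i)
      = ∑ j, η i (Module.finBasis ℝ E j) * v (dualVec E j) (f i) := by
    intro i
    conv_lhs => rw [← sum_dualVec_smul (η i)]
    simp
  simp only [this, tracePair, h, map_sum, map_smul, smul_eq_mul]
  exact Finset.sum_comm

lemma tracePair_le (v : (E →L[ℝ] ℝ) →L[ℝ] (F →L[ℝ] ℝ)) (hv : ‖v‖ ≤ 1) (B : E →L[ℝ] F) :
    tracePair v B ≤ projNorm B := by
  refine le_of_forall_gt fun d hd => ?_
  obtain ⟨k, η, f, h, hr⟩ := exists_decomp_lt B hd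
  rw [tracePair_eq_sum v B η f h]
  refine lt_of_le_of_lt (Finset.sum_le_sum fun i _ => ?_) hr
  calc v (η i) (f i) ≤ ‖v (η i) (f i)‖ := Real.le_norm_self _
    _ ≤ ‖v (η i)‖ * ‖f i‖ := (v (η i)).le_opNorm _
    _ ≤ ‖η i‖ * ‖f i‖ := by
        gcongr
        simpa using v.le_of_opNorm_le hv (η i)

/-- An operator into `F` seen as an operator into the bidual of `F`. -/
noncomputable def toBidual (u : (E →L[ℝ] ℝ) →L[ℝ] F) :
    (E →L[ℝ] ℝ) →L[ℝ] ((F →L[ℝ] ℝ) →L[ℝ] ℝ) :=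
  (ContinuousLinearMap.id ℝ (F →L[ℝ] ℝ)).flip.comp u

omit [FiniteDimensional ℝ E] in
lemma toBidual_apply (u : (E →L[ℝ] ℝ) →L[ℝ] F) (η : E →L[ℝ] ℝ) (g : F →L[ℝ] ℝ) :
    toBidual u η g = g (u η) := rfl

omit [FiniteDimensional ℝ E] in
lemma norm_toBidual_le (u : (E →L[ℝ] ℝ) →L[ℝ] F) : ‖toBidual u‖ ≤ ‖u‖ := by
  refine ContinuousLinearMap.opNorm_le_bound _ (norm_nonneg _) fun η => ?_
  refine ContinuousLinearMap.opNorm_le_bound _ (by positivity) fun g => ?_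
  rw [toBidual_apply, mul_comm]
  exact (g.le_opNorm _).trans (by gcongr; exact u.le_opNorm _)

/-- Symmetry of the trilinear expression in `u`, `A`, `v`: the map `A` can be moved from one side
of the pairing to the other, at the price of a transposition. -/
lemma tracePair_swap (A : E →L[ℝ] (E →L[ℝ] ℝ)) (u : (E →L[ℝ] ℝ) →L[ℝ] F)
    (v : (E →L[ℝ] ℝ) →L[ℝ] (F →L[ℝ] ℝ)) :
    tracePair v (u.comp A.flip) = tracePair (toBidual u) (v.comp A) := by
  have h : ∀ x, (u.comp A.flip) x = ∑ k, A (Module.finBasis ℝ E k) x • u (dualVec E k) := by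
    intro x
    conv_lhs => rw [ContinuousLinearMap.comp_apply, ← sum_dualVec_smul (A.flip x)]
    simp
  rw [tracePair_eq_sum v _ _ _ h]
  rfl

/-! ### The projective norm through the pairing -/

/-- Hahn–Banach duality `(E* ⊗̂ F)* = L(E*, F*)`: the projective norm is attained by the pairing. -/
lemma exists_tracePair_eq (B : E →L[ℝ] F) :
    ∃ v : (E →L[ℝ] ℝ) →L[ℝ] (F →L[ℝ] ℝ), ‖v‖ ≤ 1 ∧ projNorm B ≤ tracePair v B := by
  have proj_zero : projNorm (0 : E →L[ℝ] F) = 0 := by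
    have := projNorm_smul (0 : E →L[ℝ] F) (c := 2) (by norm_num)
    rw [smul_zero] at this
    linarith
  obtain ⟨ψ, hψ, hψle⟩ : ∃ ψ : (E →L[ℝ] F) →ₗ[ℝ] ℝ, ψ B = projNorm B ∧
      ∀ T, ψ T ≤ projNorm T := by
    by_cases hB : B = 0
    · exact ⟨0, by simp [hB, proj_zero], fun T => projNorm_nonneg T⟩
    obtain ⟨g, hg, hgle⟩ := exists_extension_of_le_sublinear
      (LinearPMap.mkSpanSingleton B (projNorm B) hB) projNorm
      (fun c hc T => projNorm_smul T hc) projNorm_add_le (by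
        rintro ⟨x, hx⟩
        obtain ⟨c, rfl⟩ := Submodule.mem_span_singleton.1 hx
        have happ : LinearPMap.mkSpanSingleton B (projNorm B) hB ⟨c • B, hx⟩ = c • projNorm B :=
          LinearPMap.mkSpanSingleton'_apply _ _ _ c _
        rw [happ, smul_eq_mul]
        rcases lt_or_ge 0 c with hc | hc
        · exact (projNorm_smul B hc).ge
        · exact (mul_nonpos_of_nonpos_of_nonneg hc (projNorm_nonneg B)).trans
            (projNorm_nonneg _))
    refine ⟨g, ?_, hgle⟩
    have h := hg ⟨B, Submodule.mem_span_singleton_self B⟩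
    exact h.trans (LinearPMap.mkSpanSingleton_apply ℝ ℝ hB (projNorm B))
  -- `ψ` restricted to rank one tensors is the required operator `E* → F*`.
  have rank_one_le : ∀ (η : E →L[ℝ] ℝ) (f : F), ψ (η.smulRight f) ≤ ‖η‖ * ‖f‖ := fun η f =>
    (hψle _).trans (by
      simpa using projNorm_le (ι := Unit) (η.smulRight f) (fun _ => η) (fun _ => f) (by simp))
  let w : (E →L[ℝ] ℝ) →ₗ[ℝ] F →ₗ[ℝ] ℝ := LinearMap.mk₂ ℝ (fun η f => ψ (η.smulRight f))
    (fun η η' f => by rw [← map_add]; congr 1; ext x; simp [add_smul])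
    (fun c η f => by rw [← map_smul]; congr 1; ext x; simp [mul_smul])
    (fun η f f' => by rw [← map_add]; congr 1; ext x; simp)
    (fun c η f => by rw [← map_smul]; congr 1; ext x; simp [smul_comm c])
  let v : (E →L[ℝ] ℝ) →L[ℝ] (F →L[ℝ] ℝ) := w.mkContinuous₂ 1 (fun η f => by
    rw [Real.norm_eq_abs, one_mul, abs_le']
    refine ⟨rank_one_le η f, ?_⟩
    rw [← map_neg (w η)]
    have h := rank_one_le η (-f)
    rwa [norm_neg] at h)
  refine ⟨v, LinearMap.mkContinuous₂_norm_le _ zero_le_one _, ?_⟩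
  rw [← hψ]
  have hB : B = ∑ j, (dualVec E j).smulRight (B (Module.finBasis ℝ E j)) := by
    ext x
    rw [map_eq_sum_dualVec B x]
    simp
  conv_lhs => rw [hB, map_sum]
  rfl

/-- Isometric duality `(E ⊗̌ F)* = E* ⊗̂ F*`: on `E* ⊗ F*` the projective norm is already
determined by operators with values in `F`, rather than in the bidual of `F`. -/
lemma projNorm_dual_le (C : E →L[ℝ] (F →L[ℝ] ℝ)) {c : ℝ}
    (hc : ∀ u : (E →L[ℝ] ℝ) →L[ℝ] F, ‖u‖ ≤ 1 → tracePair (toBidual u) C ≤ c) :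
    projNorm C ≤ c := by
  have hc0 : 0 ≤ c := by simpa [tracePair, toBidual_apply] using hc 0 (by simp)
  have key : ∀ ε : ℝ, 0 < ε → ε < 1 → (1 - ε) * projNorm C ≤ c := by
    intro ε hε hε1
    obtain ⟨t, ht1, htf, htc⟩ :=
      (isCompact_closedBall (0 : E →L[ℝ] ℝ) 1).finite_cover_balls hε
    have := htf.fintype
    -- The net computes operator norms up to the factor `1 - ε`.
    have norm_le : ∀ u : (E →L[ℝ] ℝ) →L[ℝ] F, (1 - ε) * ‖u‖ ≤ ‖fun ξ : t => u ξ‖ := by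
      intro u
      have : ‖u‖ ≤ ‖fun ξ : t => u ξ‖ + ε * ‖u‖ := by
        refine ContinuousLinearMap.opNorm_le_of_unit_norm (by positivity) fun η hη => ?_
        obtain ⟨ξ, hξ, hηξ⟩ : ∃ ξ ∈ t, dist η ξ < ε := by
          simpa using htc (show η ∈ Metric.closedBall 0 1 by simp [hη])
        have h1 : ‖u ξ‖ ≤ ‖fun ξ : t => u ξ‖ := norm_le_pi_norm (fun ξ : t => u ξ) ⟨ξ, hξ⟩
        have h2 : ‖u (η - ξ)‖ ≤ ε * ‖u‖ := by
          rw [mul_comm]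
          refine (u.le_opNorm _).trans ?_
          rw [← dist_eq_norm]
          gcongr
        have h3 : u η = u ξ + u (η - ξ) := by simp
        rw [h3]
        exact (norm_add_le _ _).trans (add_le_add h1 h2)
      linarith
    -- By homogeneity, the hypothesis bounds the functional `u ↦ tracePair (toBidual u) C` by `c`.
    have φ_le : ∀ u : (E →L[ℝ] ℝ) →L[ℝ] F, tracePair (toBidual u) C ≤ c * ‖u‖ := by
      intro u
      rcases eq_or_ne u 0 with rfl | hu
      · simp [tracePair, toBidual_apply]
      have hu' : 0 < ‖u‖ := norm_pos_iff.2 hu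
      have h := hc (‖u‖⁻¹ • u) (by rw [norm_smul]; simp [hu'.ne'])
      have h' : tracePair (toBidual (‖u‖⁻¹ • u)) C = ‖u‖⁻¹ * tracePair (toBidual u) C := by
        simp [tracePair, toBidual_apply, Finset.mul_sum]
      rwa [h', inv_mul_le_iff₀ hu', mul_comm] at h
    let φ : ((E →L[ℝ] ℝ) →L[ℝ] F) →ₗ[ℝ] ℝ :=
      { toFun := fun u => tracePair (toBidual u) C
        map_add' := fun u u' => by simp [tracePair, toBidual_apply, Finset.sum_add_distrib]
        map_smul' := fun a u => by simp [tracePair, toBidual_apply, Finset.mul_sum] }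
    -- Evaluation on the net, an embedding of `L(E*, F)` into `ℓ_∞(t; F)`.
    let Φ : ((E →L[ℝ] ℝ) →L[ℝ] F) →ₗ[ℝ] (t → F) :=
      { toFun := fun u ξ => u ξ
        map_add' := fun u u' => rfl
        map_smul' := fun a u => rfl }
    have Φ_inj : Function.Injective Φ := by
      refine (injective_iff_map_eq_zero Φ).2 fun u hu => ?_
      have h := norm_le u
      rw [show (fun ξ : t => u ξ) = 0 from hu, norm_zero] at h
      exact norm_le_zero_iff.1 (nonpos_of_mul_nonpos_right h (by linarith))
    let e := LinearEquiv.ofInjective Φ Φ_inj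
    have hM : 0 ≤ c / (1 - ε) := div_nonneg hc0 (by linarith)
    obtain ⟨g, hg, hgle⟩ := exists_extension_of_le_sublinear
      ⟨LinearMap.range Φ, φ ∘ₗ e.symm.toLinearMap⟩ (fun y : t → F => c / (1 - ε) * ‖y‖)
      (fun a ha y => by rw [norm_smul, Real.norm_of_nonneg ha.le]; ring)
      (fun y z => by rw [← mul_add]; gcongr; exact norm_add_le _ _)
      (by
        intro y
        obtain ⟨u, rfl⟩ := e.surjective y
        change φ (e.symm (e u)) ≤ c / (1 - ε) * ‖fun ξ : t => u ξ‖
        rw [e.symm_apply_apply]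
        refine (φ_le u).trans ?_
        rw [div_mul_eq_mul_div, le_div_iff₀ (by linarith), mul_assoc]
        gcongr
        rw [mul_comm]
        exact norm_le u)
    have hgφ : ∀ u, g (Φ u) = φ u := by
      intro u
      refine (hg (e u)).trans ?_
      change φ (e.symm (e u)) = φ u
      rw [e.symm_apply_apply]
    have g_abs : ∀ y, ‖g y‖ ≤ c / (1 - ε) * ‖y‖ := by
      intro y
      rw [Real.norm_eq_abs, abs_le']
      refine ⟨hgle y, ?_⟩
      rw [← map_neg]
      simpa using hgle (-y)
    classical
    -- The components of `g` under `ℓ_∞(t; F)* = ℓ_1(t; F*)`.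
    let G : t → (F →L[ℝ] ℝ) := fun ξ =>
      (g.mkContinuous _ g_abs).comp (ContinuousLinearMap.single ℝ (fun _ : t => F) ξ)
    have g_eq : ∀ y, g y = ∑ ξ, G ξ (y ξ) := by
      intro y
      conv_lhs => rw [← Finset.univ_sum_single y, map_sum]
      rfl
    have sum_norm_le : ∑ ξ, ‖G ξ‖ ≤ c / (1 - ε) := by
      refine le_of_forall_pos_le_add fun δ hδ => ?_
      have : ∀ ξ, ∃ y : F, ‖y‖ ≤ 1 ∧ ‖G ξ‖ - δ / (Fintype.card t + 1) ≤ G ξ y := by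
        intro ξ
        have hδ' : 0 < δ / (Fintype.card t + 1) := by positivity
        obtain ⟨y, hy, hy'⟩ := (G ξ).exists_lt_apply_of_lt_opNorm
          (show ‖G ξ‖ - δ / (Fintype.card t + 1) < ‖G ξ‖ by linarith)
        rw [Real.norm_eq_abs, lt_abs] at hy'
        rcases hy' with h | h
        · exact ⟨y, hy.le, h.le⟩
        · exact ⟨-y, by simpa using hy.le, by simpa using h.le⟩
      choose y hy hy' using this
      have h1 : ∑ ξ, (‖G ξ‖ - δ / (Fintype.card t + 1)) ≤ g y := by
        rw [g_eq]
        exact Finset.sum_le_sum fun ξ _ => hy' ξ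
      have h2 : g y ≤ c / (1 - ε) := by
        refine (hgle y).trans (mul_le_of_le_one_right hM ?_)
        exact (pi_norm_le_iff_of_nonneg zero_le_one).2 hy
      have h3 : (Fintype.card t : ℝ) * (δ / (Fintype.card t + 1)) ≤ δ := by
        rw [mul_div_assoc', div_le_iff₀ (by positivity)]
        nlinarith
      rw [Finset.sum_sub_distrib, Finset.sum_const, Finset.card_univ, nsmul_eq_mul] at h1
      linarith
    have C_eq : ∀ x, C x = ∑ ξ : t, (ξ : E →L[ℝ] ℝ) x • G ξ := by
      intro x
      ext f
      -- Test the representation of `φ` against the rank one operator `η ↦ η x • f`.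
      let u : (E →L[ℝ] ℝ) →L[ℝ] F := (ContinuousLinearMap.apply ℝ ℝ x).smulRight f
      have h1 : φ u = C x f := by
        rw [map_eq_sum_dualVec C x]
        simp [φ, tracePair, toBidual_apply, u]
      have h2 : g (Φ u) = ∑ ξ : t, (ξ : E →L[ℝ] ℝ) x * G ξ f := by
        rw [g_eq]
        simp [Φ, u]
      rw [← h1, ← hgφ, h2]
      simp
    have h := projNorm_le C (fun ξ : t => (ξ : E →L[ℝ] ℝ)) G C_eq
    have h' : ∑ ξ : t, ‖(ξ : E →L[ℝ] ℝ)‖ * ‖G ξ‖ ≤ ∑ ξ, ‖G ξ‖ :=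
      Finset.sum_le_sum fun ξ _ => mul_le_of_le_one_left (norm_nonneg _)
        (by simpa using ht1 ξ.2)
    rw [← le_div_iff₀' (by linarith)]
    exact h.trans (h'.trans sum_norm_le)
  -- Let `ε` tend to `0`.
  by_contra! hlt
  have hp : 0 < projNorm C := hc0.trans_lt hlt
  have := key ((projNorm C - c) / (2 * projNorm C)) (by apply div_pos <;> linarith)
    (by rw [div_lt_one (by linarith)]; linarith)
  have h2 : (1 - (projNorm C - c) / (2 * projNorm C)) * projNorm C
      = (projNorm C + c) / 2 := by field_simp; ring
  linarith

/-! ### The Grothendieck constant -/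

lemma norm_zero_le_one {X Y : Type*} [NormedAddCommGroup X] [NormedSpace ℝ X]
    [NormedAddCommGroup Y] [NormedSpace ℝ Y] : ‖(0 : X →L[ℝ] Y)‖ ≤ 1 := by
  simp

variable (E F) in
/-- The supremum defining `KG` is a genuine one: the coordinate decomposition
`∑ j, b_j* ⊗ u (A.flip b_j)` bounds all projective norms involved. -/
lemma KG_bddAbove : BddAbove { r : ℝ | ∃ (A : E →L[ℝ] (E →L[ℝ] ℝ)) (u : (E →L[ℝ] ℝ) →L[ℝ] F),
    ‖A‖ ≤ 1 ∧ ‖u‖ ≤ 1 ∧ r = projNorm (u.comp A.flip) } := by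
  refine ⟨∑ j, ‖dualVec E j‖ * ‖Module.finBasis ℝ E j‖, ?_⟩
  rintro r ⟨A, u, hA, hu, rfl⟩
  refine (projNorm_le _ _ _ (map_eq_sum_dualVec (u.comp A.flip))).trans ?_
  gcongr with j
  have h1 : ‖A.flip‖ ≤ 1 := by rwa [ContinuousLinearMap.opNorm_flip]
  have h2 := A.flip.le_of_opNorm_le h1 (Module.finBasis ℝ E j)
  have h3 := u.le_of_opNorm_le hu (A.flip (Module.finBasis ℝ E j))
  rw [one_mul] at h2 h3
  exact h3.trans h2

lemma projNorm_le_KG (A : E →L[ℝ] (E →L[ℝ] ℝ)) (u : (E →L[ℝ] ℝ) →L[ℝ] F)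
    (hA : ‖A‖ ≤ 1) (hu : ‖u‖ ≤ 1) : projNorm (u.comp A.flip) ≤ KG E F :=
  le_csSup (KG_bddAbove E F) ⟨A, u, hA, hu, rfl⟩

end Pairing

/-- `K_G(E, F*) = K_G(E, F)` for `E` finite dimensional and `F` a Banach space. -/
theorem statement2 (E F : Type*)
    [NormedAddCommGroup E] [NormedSpace ℝ E] [FiniteDimensional ℝ E]
    [NormedAddCommGroup F] [NormedSpace ℝ F] [CompleteSpace F] :
    KG E (F →L[ℝ] ℝ) = KG E F := by
  have flip_le : ∀ A : E →L[ℝ] (E →L[ℝ] ℝ), ‖A‖ ≤ 1 → ‖A.flip‖ ≤ 1 := fun A hA => by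
    rwa [ContinuousLinearMap.opNorm_flip]
  apply le_antisymm
  · refine csSup_le ⟨_, 0, 0, norm_zero_le_one, norm_zero_le_one, rfl⟩ ?_
    rintro r ⟨A, v, hA, hv, rfl⟩
    refine projNorm_dual_le _ fun u hu => ?_
    rw [← tracePair_swap]
    exact (tracePair_le v hv _).trans (projNorm_le_KG A.flip u (flip_le A hA) hu)
  · refine csSup_le ⟨_, 0, 0, norm_zero_le_one, norm_zero_le_one, rfl⟩ ?_
    rintro r ⟨A, u, hA, hu, rfl⟩
    obtain ⟨v, hv, h⟩ := exists_tracePair_eq (u.comp A.flip)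
    refine h.trans ?_
    rw [tracePair_swap]
    exact (tracePair_le _ ((norm_toBidual_le u).trans hu) _).trans
      (projNorm_le_KG A.flip v (flip_le A hA) hv)
end

section
/- Let F be a finite dimensional Banach space and n ≥ 1. Then K_G(ℓ_2^n, F) = ρ(ℓ_2^n, F). -/
/-!
The two suprema are taken over the same set of numbers. The Riesz isometry `J : E ≃ E*` of
`E = ℓ₂ⁿ` turns any admissible pair `(A, u)` into the contraction `u ∘ Aᵀ ∘ J⁻¹ : E* → F`, which
has the same projective norm as `u ∘ Aᵀ` because the projective norm is invariant under isometric
changes of the domain (`projNorm_comp_isometry`). Conversely, for a contraction `u : E* → F`,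
taking `Aᵀ = J` gives a pair `(A, u)` with the projective norm of `u`.
-/

open scoped BigOperators

/-- Pulling a representation `u = ∑ ηᵢ ⊗ fᵢ` back along an isometry gives a representation of the
composition with the same cost. -/
lemma projNorm_comp_isometry {X Y F : Type*} [NormedAddCommGroup X] [NormedSpace ℝ X]
    [NormedAddCommGroup Y] [NormedSpace ℝ Y] [NormedAddCommGroup F] [NormedSpace ℝ F]
    (e : Y ≃ₗᵢ[ℝ] X) (u : X →L[ℝ] F) :
    projNorm (u.comp (e : Y →L[ℝ] X)) = projNorm u := by
  unfold projNorm
  congr 1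
  ext r
  constructor
  · rintro ⟨k, η, f, h, rfl⟩
    refine ⟨k, fun i => (η i).comp (e.symm : X →L[ℝ] Y), f, fun x => ?_, ?_⟩
    · simpa using h (e.symm x)
    · simp only [ContinuousLinearMap.opNorm_comp_linearIsometryEquiv]
  · rintro ⟨k, η, f, h, rfl⟩
    refine ⟨k, fun i => (η i).comp (e : Y →L[ℝ] X), f, fun y => ?_, ?_⟩
    · simpa using h (e y)
    · simp only [ContinuousLinearMap.opNorm_comp_linearIsometryEquiv]

/-- The Riesz isometry of a real Hilbert space with its dual, as a map linear over `ℝ`: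
`InnerProductSpace.toDual` is typed as semilinear over `starRingEnd ℝ`. -/
noncomputable def realRiesz (E : Type*) [NormedAddCommGroup E] [InnerProductSpace ℝ E]
    [CompleteSpace E] : E ≃ₗᵢ[ℝ] (E →L[ℝ] ℝ) where
  toFun := InnerProductSpace.toDual ℝ E
  invFun := (InnerProductSpace.toDual ℝ E).symm
  left_inv := (InnerProductSpace.toDual ℝ E).symm_apply_apply
  right_inv := (InnerProductSpace.toDual ℝ E).apply_symm_apply
  map_add' := map_add _
  map_smul' c x := by simp
  norm_map' x := (InnerProductSpace.toDual ℝ E).norm_map x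

/-- For finite dimensional `F` and `n ≥ 1`, `K_G(ℓ₂ⁿ, F) = ρ(ℓ₂ⁿ, F)`. -/
theorem statement4 (n : ℕ) (hn : 1 ≤ n) (F : Type*)
    [NormedAddCommGroup F] [NormedSpace ℝ F] [FiniteDimensional ℝ F] :
    KG (EuclideanSpace ℝ (Fin n)) F = rho (EuclideanSpace ℝ (Fin n)) F := by
  unfold KG rho
  congr 1
  ext r
  let J := realRiesz (EuclideanSpace ℝ (Fin n))
  constructor
  · rintro ⟨A, u, hA, hu, rfl⟩
    refine ⟨(u.comp A.flip).comp (J.symm : _ →L[ℝ] _), ?_, ?_⟩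
    · rw [ContinuousLinearMap.opNorm_comp_linearIsometryEquiv]
      refine (u.opNorm_comp_le A.flip).trans (mul_le_one₀ hu (norm_nonneg _) ?_)
      rwa [ContinuousLinearMap.opNorm_flip]
    · exact (projNorm_comp_isometry J.symm _).symm
  · rintro ⟨u, hu, rfl⟩
    refine ⟨(J : _ →L[ℝ] _).flip, u, ?_, hu, ?_⟩
    · rw [ContinuousLinearMap.opNorm_flip]
      exact J.toLinearIsometry.norm_toContinuousLinearMap_le
    · rw [ContinuousLinearMap.flip_flip]
      exact (projNorm_comp_isometry J u).symm
end
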